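/- Let (X,T) be a topological dynamical system given by a continuous ℤ^d-action on a compact metric space and let μ be an ergodic T-invariant Borel probability measure. If (X,T) is μ-mean equicontinuous, then for every Borel set B ⊆ X the system (X,T) is μ-1_B-mean equicontinuous, where 1_B is the indicator function of B. -/

import Mathlib

open MeasureTheory Filter Finset Metric
open scoped Classical

noncomputable section

/-- The box `{0,…,n−1}^d` inside `ℤ^d`. -/
def Fbox (d n : ℕ) : Finset (Fin d → ℤ) :=
  Fintype.piFinset fun _ => Finset.Icc (0 : ℤ) ((n : ℤ) - 1)

/-- Upper density of a subset of `ℤ^d` along the boxes `F_n`. -/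
def upperDensity (d : ℕ) (S : Set (Fin d → ℤ)) : ℝ :=
  Filter.limsup
    (fun n : ℕ => (((Fbox d n).filter (fun j => j ∈ S)).card : ℝ) / ((Fbox d n).card : ℝ))
    Filter.atTop

/-- Lower density of a subset of `ℤ^d` along the boxes `F_n`. -/
def lowerDensity (d : ℕ) (S : Set (Fin d → ℤ)) : ℝ :=
  Filter.liminf
    (fun n : ℕ => (((Fbox d n).filter (fun j => j ∈ S)).card : ℝ) / ((Fbox d n).card : ℝ))
    Filter.atTop

variable {X : Type*}

/-- The Besicovitch pseudometric `d_b(x,y) = limsup_n (1/|F_n|) Σ_{j∈F_n} d(T^j x, T^j y)`. -/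
def dB {d : ℕ} [PseudoMetricSpace X] (T : (Fin d → ℤ) → X → X) (x y : X) : ℝ :=
  Filter.limsup (fun n : ℕ =>
    (∑ j ∈ Fbox d n, dist (T j x) (T j y)) / ((Fbox d n).card : ℝ)) Filter.atTop

/-- The pseudometric `ρ_f(x,y) = inf {ε > 0 : D̄({i : |f(T^i x) − f(T^i y)| > ε}) < ε}`. -/
def rhoF {d : ℕ} (T : (Fin d → ℤ) → X → X) (f : X → ℂ) (x y : X) : ℝ :=
  sInf {ε : ℝ | 0 < ε ∧ upperDensity d {i | ε < ‖f (T i x) - f (T i y)‖} < ε}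

/-- `(X,T)` is `μ`-mean equicontinuous. -/
def MuMeanEquicont {d : ℕ} [MetricSpace X] [MeasurableSpace X] (μ : Measure X)
    (T : (Fin d → ℤ) → X → X) : Prop :=
  ∀ τ : ℝ, 0 < τ → ∃ M : Set X, IsCompact M ∧ 1 - ENNReal.ofReal τ ≤ μ M ∧
    ∀ ε : ℝ, 0 < ε → ∃ δ : ℝ, 0 < δ ∧
      ∀ x ∈ M, ∀ y ∈ M, dist x y ≤ δ → dB T x y ≤ ε

/-- `(X,T)` is `μ-f`-mean equicontinuous. -/
def MuFMeanEquicont {d : ℕ} [MetricSpace X] [MeasurableSpace X] (μ : Measure X)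
    (T : (Fin d → ℤ) → X → X) (f : X → ℂ) : Prop :=
  ∀ τ : ℝ, 0 < τ → ∃ M : Set X, IsCompact M ∧ 1 - ENNReal.ofReal τ ≤ μ M ∧
    ∀ ε : ℝ, 0 < ε → ∃ δ : ℝ, 0 < δ ∧
      ∀ x ∈ M, ∀ y ∈ M, dist x y ≤ δ → rhoF T f x y ≤ ε

lemma mem_Fbox {d n : ℕ} {j : Fin d → ℤ} : j ∈ Fbox d n ↔ ∀ k, 0 ≤ j k ∧ j k < n := by
  unfold Fbox
  rw [Fintype.mem_piFinset]
  refine forall_congr' fun k => ?_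
  rw [Finset.mem_Icc]
  omega

lemma card_Fbox (d n : ℕ) : (Fbox d n).card = n ^ d := by
  unfold Fbox
  rw [Fintype.card_piFinset]
  simp

/-- Finite Vitali-type covering estimate. -/
lemma comb_aux (d K : ℕ) (S : Set (Fin d → ℤ)) (l : ℝ) (hl : 0 < l)
    (A : Finset (Fin d → ℤ)) (hA : A ⊆ Fbox d K) (n : (Fin d → ℤ) → ℕ)
    (hn : ∀ i ∈ A, 1 ≤ n i ∧ n i ≤ K ∧
      l * (n i : ℝ) ^ d < (((Fbox d (n i)).filter (fun j => j + i ∈ S)).card : ℝ)) :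
    l * A.card ≤ 4 ^ d * (((Fbox d (2 * K)).filter (fun j => j ∈ S)).card : ℝ) := by
  obtain ⟨u, huA, hdisj, hcov⟩ := Vitali.exists_disjoint_subfamily_covering_enlargement
    (fun i : Fin d → ℤ => {j | j - i ∈ Fbox d (n i)}) (A : Set (Fin d → ℤ))
    (fun i => (n i : ℝ)) 2 (by norm_num) (fun _ _ => by positivity) (K : ℝ)
    (fun a ha => by exact_mod_cast (hn a ha).2.1)
    (fun a ha => ⟨a, by
      simp only [Set.mem_setOf_eq, sub_self]
      rw [mem_Fbox]
      intro k
      have := (hn a ha).1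
      simp only [Pi.zero_apply]
      omega⟩)
  set U := A.filter (fun i => i ∈ u) with hU
  have hcovA : A ⊆ U.biUnion (fun b => Fintype.piFinset fun k =>
      Finset.Ico (b k - 2 * (n b : ℤ)) (b k + 2 * (n b : ℤ))) := by
    intro a ha
    obtain ⟨b, hb, ⟨j, hja, hjb⟩, hab⟩ := hcov a ha
    rw [Finset.mem_biUnion]
    refine ⟨b, by rw [hU, Finset.mem_filter]; exact ⟨huA hb, hb⟩, ?_⟩
    rw [Fintype.mem_piFinset]
    intro k
    rw [Finset.mem_Ico]
    have h1 := mem_Fbox.1 hja k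
    have h2 := mem_Fbox.1 hjb k
    have h3 : n a ≤ 2 * n b := by exact_mod_cast hab
    simp only [Pi.sub_apply] at h1 h2
    omega
  have hcard1 : (A.card : ℝ) ≤ ∑ b ∈ U, 4 ^ d * (n b : ℝ) ^ d := by
    have := (Finset.card_le_card hcovA).trans Finset.card_biUnion_le
    have h2 : ∀ b ∈ U, (Fintype.piFinset fun k =>
      Finset.Ico (b k - 2 * (n b : ℤ)) (b k + 2 * (n b : ℤ))).card = (4 * n b) ^ d := by
      intro b _
      rw [Fintype.card_piFinset]
      have : ∀ k, (Finset.Ico (b k - 2 * (n b : ℤ)) (b k + 2 * (n b : ℤ))).card = 4 * n b := by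
        intro k
        rw [Int.card_Ico]
        omega
      simp [this]
    rw [Finset.sum_congr rfl h2] at this
    calc (A.card : ℝ) ≤ ((∑ b ∈ U, (4 * n b) ^ d : ℕ) : ℝ) := by exact_mod_cast this
      _ = _ := by push_cast; simp [mul_pow]
  have hsum : ∑ b ∈ U, ((Fbox d (n b)).filter (fun j => j + b ∈ S)).card
      ≤ ((Fbox d (2 * K)).filter (fun j => j ∈ S)).card := by
    have himg : ∀ b ∈ U, ((Fbox d (n b)).filter (fun j => j + b ∈ S)).card =
        (((Fbox d (n b)).filter (fun j => j + b ∈ S)).image (fun j => j + b)).card := by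
      intro b _
      rw [Finset.card_image_of_injective _ (add_left_injective b)]
    rw [Finset.sum_congr rfl himg, ← Finset.card_biUnion]
    · apply Finset.card_le_card
      intro j hj
      simp only [Finset.mem_biUnion, Finset.mem_image, Finset.mem_filter] at hj ⊢
      obtain ⟨b, hb, i, ⟨hi, hiS⟩, rfl⟩ := hj
      refine ⟨?_, hiS⟩
      have hbA : b ∈ A := (Finset.mem_filter.1 hb).1
      rw [mem_Fbox] at hi ⊢
      intro k
      have h1 := hi k
      have h2 := mem_Fbox.1 (hA hbA) k
      have h3 := (hn b hbA).2.1
      simp only [Pi.add_apply]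
      push_cast
      omega
    · intro b hb c hc hbc
      rw [Function.onFun, Finset.disjoint_left]
      intro j hj1 hj2
      simp only [Finset.mem_image, Finset.mem_filter] at hj1 hj2
      obtain ⟨i, ⟨hi, _⟩, rfl⟩ := hj1
      obtain ⟨i', ⟨hi', _⟩, he⟩ := hj2
      have hbu : b ∈ u := (Finset.mem_filter.1 hb).2
      have hcu : c ∈ u := (Finset.mem_filter.1 hc).2
      have := hdisj hbu hcu hbc
      rw [Function.onFun, Set.disjoint_left] at this
      refine this (a := i + b) ?_ ?_
      · simpa using hi
      · rw [← he]; simpa using hi'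
  calc l * A.card ≤ l * ∑ b ∈ U, 4 ^ d * (n b : ℝ) ^ d := by gcongr
    _ = 4 ^ d * ∑ b ∈ U, l * (n b : ℝ) ^ d := by
        rw [Finset.mul_sum, Finset.mul_sum]
        exact Finset.sum_congr rfl fun _ _ => by ring
    _ ≤ 4 ^ d * ∑ b ∈ U, (((Fbox d (n b)).filter (fun j => j + b ∈ S)).card : ℝ) := by
        gcongr with b hb
        exact (hn b (Finset.mem_filter.1 hb).1).2.2.le
    _ ≤ _ := by
        gcongr
        exact_mod_cast hsum

/-- Points with a large ergodic average of visits to `N` at some scale `≤ K`. -/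
def badK {d : ℕ} (T : (Fin d → ℤ) → X → X) (N : Set X) (l : ℝ) (K : ℕ) : Set X :=
  {x | ∃ n : ℕ, 1 ≤ n ∧ n ≤ K ∧
    l * (n : ℝ) ^ d < (((Fbox d n).filter (fun j => T j x ∈ N)).card : ℝ)}

lemma measurableSet_badK {d : ℕ} [MeasurableSpace X] (T : (Fin d → ℤ) → X → X)
    (hTm : ∀ j, Measurable (T j)) (N : Set X) (hN : MeasurableSet N) (l : ℝ) (K : ℕ) :
    MeasurableSet (badK T N l K) := by
  have : badK T N l K = ⋃ n : ℕ, ⋃ (_ : 1 ≤ n ∧ n ≤ K),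
      {x | l * (n : ℝ) ^ d < ∑ j ∈ Fbox d n, (T j ⁻¹' N).indicator (fun _ => (1 : ℝ)) x} := by
    ext x
    simp [badK, Set.indicator_apply, and_assoc]
  rw [this]
  refine MeasurableSet.iUnion fun n => MeasurableSet.iUnion fun _ => ?_
  refine measurableSet_lt measurable_const ?_
  refine Finset.measurable_sum _ fun j _ => ?_
  exact measurable_const.indicator (hTm j hN)

lemma measure_badK_le {d : ℕ} [MeasurableSpace X] (T : (Fin d → ℤ) → X → X)
    (hTadd : ∀ i j, T (i + j) = T i ∘ T j)
    (μ : Measure X) [IsProbabilityMeasure μ]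
    (hT : ∀ j, MeasurePreserving (T j) μ μ) (N : Set X) (hN : MeasurableSet N)
    (l : ℝ) (hl : 0 < l) (K : ℕ) :
    l * μ.real (badK T N l K) ≤ 8 ^ d * μ.real N := by
  rcases Nat.eq_zero_or_pos K with hK | hK
  · have : badK T N l K = ∅ := by
      ext x
      simp only [badK, Set.mem_setOf_eq, Set.mem_empty_iff_false, iff_false]
      rintro ⟨n, h1, h2, _⟩
      omega
    rw [this]
    simp only [measureReal_empty, mul_zero]
    positivity
  have hE := measurableSet_badK T (fun j => (hT j).measurable) N hN l K
  set E := badK T N l K with hEdef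
  have hpt : ∀ x, l * ∑ i ∈ Fbox d K, (T i ⁻¹' E).indicator (fun _ => (1 : ℝ)) x
      ≤ 4 ^ d * ∑ j ∈ Fbox d (2 * K), (T j ⁻¹' N).indicator (fun _ => (1 : ℝ)) x := by
    intro x
    have hex : ∀ i, ∃ n : ℕ, T i x ∈ E → (1 ≤ n ∧ n ≤ K ∧
        l * (n : ℝ) ^ d < (((Fbox d n).filter (fun j => j + i ∈ {j | T j x ∈ N})).card : ℝ)) := by
      intro i
      by_cases h : T i x ∈ E
      · obtain ⟨n, hn⟩ := h
        refine ⟨n, fun _ => ?_⟩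
        simpa [hTadd] using hn
      · exact ⟨0, fun h' => absurd h' h⟩
    choose n hn using hex
    have := comb_aux d K {j | T j x ∈ N} l hl ((Fbox d K).filter (fun i => T i x ∈ E))
      (Finset.filter_subset _ _) n (fun i hi => hn i (Finset.mem_filter.1 hi).2)
    simpa [Set.indicator_apply] using this
  have hint : ∀ (S : Set X), MeasurableSet S → ∀ j,
      Integrable ((T j ⁻¹' S).indicator (fun _ => (1 : ℝ))) μ := fun S hS j =>
    (integrable_const _).indicator ((hT j).measurable hS)
  have hval : ∀ (S : Set X), MeasurableSet S → ∀ F : Finset (Fin d → ℤ),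
      ∫ x, ∑ j ∈ F, (T j ⁻¹' S).indicator (fun _ => (1 : ℝ)) x ∂μ = F.card * μ.real S := by
    intro S hS F
    rw [integral_finset_sum _ fun j _ => hint S hS j]
    have : ∀ j ∈ F, ∫ x, (T j ⁻¹' S).indicator (fun _ => (1 : ℝ)) x ∂μ = μ.real S := by
      intro j _
      rw [integral_indicator_const _ ((hT j).measurable hS),
        (hT j).measureReal_preimage hS.nullMeasurableSet]
      simp
    rw [Finset.sum_congr rfl this]
    simp
  have hI := integral_mono (μ := μ)
    ((integrable_finset_sum (Fbox d K) fun j _ => hint E hE j).const_mul l)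
    ((integrable_finset_sum (Fbox d (2 * K)) fun j _ => hint N hN j).const_mul (4 ^ d)) hpt
  simp only [integral_const_mul] at hI
  rw [hval E hE, hval N hN, card_Fbox, card_Fbox] at hI
  push_cast at hI
  have hKd : (0 : ℝ) < (K : ℝ) ^ d := by positivity
  have h8 : (8 : ℝ) ^ d = 4 ^ d * 2 ^ d := by rw [← mul_pow]; norm_num
  rw [mul_pow] at hI
  rw [h8]
  refine le_of_mul_le_mul_left ?_ hKd
  linarith

/-- Weak-type maximal inequality. -/
lemma exists_bad {d : ℕ} [MeasurableSpace X] (T : (Fin d → ℤ) → X → X)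
    (hTadd : ∀ i j, T (i + j) = T i ∘ T j)
    (μ : Measure X) [IsProbabilityMeasure μ]
    (hT : ∀ j, MeasurePreserving (T j) μ μ) (N : Set X) (hN : MeasurableSet N)
    (l : ℝ) (hl : 0 < l) (s : ℝ) (hs : 8 ^ d * μ.real N ≤ l * s) :
    ∃ Z : Set X, MeasurableSet Z ∧ μ Z ≤ ENNReal.ofReal s ∧ ∀ x ∉ Z, ∀ n : ℕ, 1 ≤ n →
      (((Fbox d n).filter (fun j => T j x ∈ N)).card : ℝ) / ((Fbox d n).card : ℝ) ≤ l := by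
  refine ⟨⋃ K, badK T N l K, MeasurableSet.iUnion fun K =>
    measurableSet_badK T (fun j => (hT j).measurable) N hN l K, ?_, ?_⟩
  · have hmono : Monotone (badK T N l) := by
      rintro K L hKL x ⟨n, h1, h2, h3⟩
      exact ⟨n, h1, h2.trans hKL, h3⟩
    rw [hmono.measure_iUnion]
    refine iSup_le fun K => ?_
    rw [← ofReal_measureReal (measure_ne_top _ _)]
    apply ENNReal.ofReal_le_ofReal
    have := measure_badK_le T hTadd μ hT N hN l hl K
    exact le_of_mul_le_mul_left (this.trans hs) hl
  · intro x hx n hn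
    by_contra hc
    push Not at hc
    apply hx
    refine Set.mem_iUnion.2 ⟨n, n, hn, le_rfl, ?_⟩
    rw [card_Fbox] at hc
    push_cast at hc
    rwa [lt_div_iff₀ (by positivity)] at hc

/-- Separation of a Borel set from its complement up to a small error. -/
lemma exists_sep [MetricSpace X] [CompactSpace X] [MeasurableSpace X] [BorelSpace X]
    (μ : Measure X) [IsProbabilityMeasure μ] (B : Set X) (hB : MeasurableSet B)
    (e : ℝ) (he : 0 < e) :
    ∃ (N : Set X) (r : ℝ), MeasurableSet N ∧ 0 < r ∧ μ.real N ≤ e ∧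
      ∀ x ∉ N, ∀ y ∉ N, dist x y < r → (x ∈ B ↔ y ∈ B) := by
  have he2 : ENNReal.ofReal (e / 2) ≠ 0 := by simpa using he
  obtain ⟨P, hPB, hP, hPm⟩ := hB.exists_isCompact_diff_lt (measure_ne_top μ B) he2
  obtain ⟨Q, hQB, hQ, hQm⟩ := hB.compl.exists_isCompact_diff_lt (measure_ne_top μ Bᶜ) he2
  have hd : Disjoint P Q := Set.disjoint_of_subset hPB hQB disjoint_compl_right
  obtain ⟨r, hr, hrd⟩ := hd.exists_thickenings hP hQ.isClosed
  refine ⟨(B \ P) ∪ (Bᶜ \ Q), r, (hB.diff hP.measurableSet).union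
    (hB.compl.diff hQ.measurableSet), hr, ?_, ?_⟩
  · have : μ ((B \ P) ∪ (Bᶜ \ Q)) ≤ ENNReal.ofReal e := by
      calc _ ≤ μ (B \ P) + μ (Bᶜ \ Q) := measure_union_le _ _
        _ ≤ ENNReal.ofReal (e / 2) + ENNReal.ofReal (e / 2) := add_le_add hPm.le hQm.le
        _ = _ := by rw [← ENNReal.ofReal_add (by positivity) (by positivity)]; simp
    exact ENNReal.toReal_le_of_le_ofReal he.le this
  · have key : ∀ x y, x ∈ P → y ∈ Q → ¬ dist x y < r := by
      intro x y hx hy hxy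
      refine Set.disjoint_left.1 hrd (Metric.self_subset_thickening hr P hx) ?_
      exact Metric.mem_thickening_iff.2 ⟨y, hy, hxy⟩
    intro x hx y hy hxy
    simp only [Set.mem_union, Set.mem_diff, Set.mem_compl_iff, not_or, not_and, not_not] at hx hy
    constructor
    · intro hxB
      by_contra hyB
      exact key x y (hx.1 hxB) (hy.2 hyB) hxy
    · intro hyB
      by_contra hxB
      exact key y x (hy.1 hyB) (hx.2 hxB) (by rwa [dist_comm])

lemma rho_le {d : ℕ} [MetricSpace X] [CompactSpace X] (T : (Fin d → ℤ) → X → X)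
    (B N : Set X) (r e : ℝ) (hr : 0 < r) (he : 0 < e)
    (hsep : ∀ x ∉ N, ∀ y ∉ N, dist x y < r → (x ∈ B ↔ y ∈ B)) (x y : X)
    (hx : ∀ n : ℕ, 1 ≤ n →
      (((Fbox d n).filter (fun j => T j x ∈ N)).card : ℝ) / ((Fbox d n).card : ℝ) ≤ e / 4)
    (hy : ∀ n : ℕ, 1 ≤ n →
      (((Fbox d n).filter (fun j => T j y ∈ N)).card : ℝ) / ((Fbox d n).card : ℝ) ≤ e / 4)
    (hdb : dB T x y ≤ r * e / 8) :
    rhoF T (B.indicator fun _ => (1 : ℂ)) x y ≤ e := by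
  refine csInf_le ⟨0, fun z hz => hz.1.le⟩ ⟨he, ?_⟩
  suffices h : upperDensity d {i | e < ‖(B.indicator (fun _ => (1 : ℂ))) (T i x) -
      (B.indicator (fun _ => (1 : ℂ))) (T i y)‖} ≤ 3 * e / 4 by linarith
  have hev : ∀ᶠ n : ℕ in atTop,
      (∑ j ∈ Fbox d n, dist (T j x) (T j y)) / ((Fbox d n).card : ℝ) < r * e / 4 := by
    refine eventually_lt_of_limsup_lt (lt_of_le_of_lt hdb ?_) ?_
    · have : 0 < r * e := by positivity
      linarith
    · refine isBoundedUnder_of ⟨Metric.diam (Set.univ : Set X), fun n => ?_⟩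
      refine div_le_of_le_mul₀ (by positivity) Metric.diam_nonneg ?_
      calc _ ≤ ∑ j ∈ Fbox d n, Metric.diam (Set.univ : Set X) :=
            Finset.sum_le_sum fun j _ => Metric.dist_le_diam_of_mem
              isCompact_univ.isBounded (Set.mem_univ _) (Set.mem_univ _)
        _ = _ := by simp [mul_comm]
  refine limsup_le_of_le ?_ ?_
  · exact (isBoundedUnder_of ⟨0, fun n => by positivity⟩ :
      IsBoundedUnder (· ≥ ·) atTop _).isCoboundedUnder_le
  · filter_upwards [hev, eventually_ge_atTop 1] with n h1 hn
    have h2 := hx n hn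
    have h3 := hy n hn
    have hc : (0 : ℝ) < ((Fbox d n).card : ℝ) := by
      rw [card_Fbox]; positivity
    rw [div_lt_iff₀ hc] at h1
    rw [div_le_iff₀ hc] at h2 h3 ⊢
    have hfar : r * (((Fbox d n).filter (fun j => r ≤ dist (T j x) (T j y))).card : ℝ)
        ≤ ∑ j ∈ Fbox d n, dist (T j x) (T j y) := by
      calc _ = ∑ j ∈ (Fbox d n).filter (fun j => r ≤ dist (T j x) (T j y)), r := by
            simp [mul_comm]
        _ ≤ ∑ j ∈ (Fbox d n).filter (fun j => r ≤ dist (T j x) (T j y)),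
              dist (T j x) (T j y) :=
            Finset.sum_le_sum fun j hj => (Finset.mem_filter.1 hj).2
        _ ≤ _ := Finset.sum_le_sum_of_subset_of_nonneg (Finset.filter_subset _ _)
              fun _ _ _ => dist_nonneg
    have h4 : (((Fbox d n).filter (fun j => r ≤ dist (T j x) (T j y))).card : ℝ)
        ≤ e / 4 * ((Fbox d n).card : ℝ) := by
      refine le_of_mul_le_mul_left ?_ hr
      linarith
    have hsub : (Fbox d n).filter (fun j => j ∈ {i | e < ‖(B.indicator (fun _ => (1 : ℂ))) (T i x) -
        (B.indicator (fun _ => (1 : ℂ))) (T i y)‖}) ⊆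
        ((Fbox d n).filter (fun j => T j x ∈ N) ∪ (Fbox d n).filter (fun j => T j y ∈ N)) ∪
          (Fbox d n).filter (fun j => r ≤ dist (T j x) (T j y)) := by
      intro j hj
      rw [Finset.mem_filter] at hj
      obtain ⟨hjF, hj⟩ := hj
      simp only [Finset.mem_union, Finset.mem_filter, hjF, true_and]
      by_contra hc
      push Not at hc
      obtain ⟨⟨ha, hb⟩, hcc⟩ := hc
      have := hsep _ ha _ hb hcc
      simp only [Set.mem_setOf_eq, Set.indicator_apply, this, sub_self, norm_zero] at hj
      linarith
    have h5 := ((Finset.card_le_card hsub).trans (Finset.card_union_le _ _)).trans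
      (Nat.add_le_add_right (Finset.card_union_le _ _) _)
    have h6 : (((Fbox d n).filter (fun j => j ∈ {i | e < ‖(B.indicator (fun _ => (1 : ℂ))) (T i x) -
        (B.indicator (fun _ => (1 : ℂ))) (T i y)‖})).card : ℝ) ≤ _ := Nat.cast_le.2 h5
    push_cast at h6
    exact h6.trans (by linarith)

/-- if a TDS with an ergodic invariant measure `μ` is `μ`-mean
equicontinuous, then it is `μ-1_B`-mean equicontinuous for every Borel set `B`. -/
theorem stmt19 {d : ℕ}
    [MetricSpace X] [CompactSpace X] [MeasurableSpace X] [BorelSpace X]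
    (T : (Fin d → ℤ) → X → X)
    (hTc : ∀ j, Continuous (T j))
    (hTadd : ∀ i j, T (i + j) = T i ∘ T j)
    (μ : Measure X) [IsProbabilityMeasure μ]
    (hT : ∀ j, MeasurePreserving (T j) μ μ)
    (herg : ∀ A : Set X, MeasurableSet A → (∀ j, T j ⁻¹' A = A) → μ A = 0 ∨ μ A = 1)
    (hm : MuMeanEquicont μ T) :
    ∀ B : Set X, MeasurableSet B →
      MuFMeanEquicont μ T (B.indicator fun _ => (1 : ℂ)) := by
  intro B hB τ hτ
  obtain ⟨M₀, hM₀, hM₀m, hM₀e⟩ := hm (τ / 4) (by positivity)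
  -- scales
  have hstep : ∀ k : ℕ, ∃ (N : Set X) (r : ℝ) (Z : Set X), 0 < r ∧ MeasurableSet Z ∧
      μ Z ≤ ENNReal.ofReal (τ / 4 / 2 / 2 ^ k) ∧
      (∀ x ∉ N, ∀ y ∉ N, dist x y < r → (x ∈ B ↔ y ∈ B)) ∧
      ∀ x ∉ Z, ∀ n : ℕ, 1 ≤ n →
        (((Fbox d n).filter (fun j => T j x ∈ N)).card : ℝ) / ((Fbox d n).card : ℝ)
          ≤ (1 / ((k : ℝ) + 1)) / 4 := by
    intro k
    have hl : (0 : ℝ) < (1 / ((k : ℝ) + 1)) / 4 := by positivity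
    obtain ⟨N, r, hN, hr, hNm, hsep⟩ := exists_sep μ B hB
      ((1 / ((k : ℝ) + 1)) / 4 * (τ / 4 / 2 / 2 ^ k) / 8 ^ d) (by positivity)
    obtain ⟨Z, hZ, hZm, hZg⟩ := exists_bad T hTadd μ hT N hN _ hl (τ / 4 / 2 / 2 ^ k) (by
      rw [le_div_iff₀ (by positivity)] at hNm
      linarith)
    exact ⟨N, r, Z, hr, hZ, hZm, hsep, hZg⟩
  choose N r Z hr hZ hZm hsep hZg using hstep
  have hZtot : μ (⋃ k, Z k) ≤ ENNReal.ofReal (τ / 4) := by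
    calc μ (⋃ k, Z k) ≤ ∑' k, μ (Z k) := measure_iUnion_le _
      _ ≤ ∑' k : ℕ, ENNReal.ofReal (τ / 4 / 2 / 2 ^ k) := ENNReal.tsum_le_tsum hZm
      _ = ENNReal.ofReal (∑' k : ℕ, τ / 4 / 2 / 2 ^ k) :=
          (ENNReal.ofReal_tsum_of_nonneg (fun k => by positivity)
            (summable_geometric_two' (τ / 4))).symm
      _ = _ := by rw [tsum_geometric_two']
  have hGm : MeasurableSet (M₀ \ ⋃ k, Z k) := hM₀.measurableSet.diff (MeasurableSet.iUnion hZ)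
  obtain ⟨M, hMG, hM, hMm⟩ := hGm.exists_isCompact_diff_lt (measure_ne_top μ _)
    (ε := ENNReal.ofReal (τ / 4)) (by simpa using hτ)
  refine ⟨M, hM, ?_, ?_⟩
  · have h1 : (1 : ENNReal) ≤ μ M₀ + ENNReal.ofReal (τ / 4) := tsub_le_iff_right.1 hM₀m
    have h2 : μ M₀ ≤ μ M + ENNReal.ofReal (τ / 4) + ENNReal.ofReal (τ / 4) := by
      have hsub : M₀ ⊆ (M ∪ ((M₀ \ ⋃ k, Z k) \ M)) ∪ ⋃ k, Z k := by
        intro x hx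
        by_cases h1 : x ∈ ⋃ k, Z k
        · exact Or.inr h1
        · by_cases h2 : x ∈ M
          · exact Or.inl (Or.inl h2)
          · exact Or.inl (Or.inr ⟨⟨hx, h1⟩, h2⟩)
      calc μ M₀ ≤ _ := measure_mono hsub
        _ ≤ _ := measure_union_le _ _
        _ ≤ _ := add_le_add ((measure_union_le _ _).trans (add_le_add le_rfl hMm.le)) hZtot
    rw [tsub_le_iff_right]
    calc (1 : ENNReal) ≤ _ := h1
      _ ≤ μ M + ENNReal.ofReal (τ / 4) + ENNReal.ofReal (τ / 4) + ENNReal.ofReal (τ / 4) := by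
          gcongr
      _ = μ M + ENNReal.ofReal (τ / 4 + τ / 4 + τ / 4) := by
          rw [ENNReal.ofReal_add (by positivity) (by positivity),
            ENNReal.ofReal_add (by positivity) (by positivity)]
          ring
      _ ≤ _ := by
          gcongr
          linarith
  · intro ε hε
    obtain ⟨k, hk⟩ := exists_nat_one_div_lt hε
    obtain ⟨δ, hδ, hδe⟩ := hM₀e (r k * (1 / ((k : ℝ) + 1)) / 8) (by
      have := hr k
      positivity)
    refine ⟨δ, hδ, fun x hx y hy hxy => ?_⟩
    have hgood : ∀ z ∈ M, z ∉ Z k := fun z hz hzk =>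
      (hMG hz).2 (Set.mem_iUnion.2 ⟨k, hzk⟩)
    refine (rho_le T B (N k) (r k) (1 / ((k : ℝ) + 1)) (hr k) (by positivity) (hsep k) x y
      (hZg k x (hgood x hx)) (hZg k y (hgood y hy))
      (hδe x (hMG hx).1 y (hMG hy).1 hxy)).trans hk.le
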